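/- Let G be a finite connected bridgeless simple graph, let S be a pairwise-disconnecting set of G, and let e ∈ S. Then the set S_M(e), defined as the union of {e} and the set of all bridges of G − e, is a maximal pairwise-disconnecting set of G containing S. -/

import Mathlib

open LaurentPolynomial Finset

/-- `S` is a pairwise-disconnecting set of `G`: a set of at least two edges of `G` such that
deleting any two distinct edges of `S` disconnects the graph. -/
def IsPDSet {V : Type*} (G : SimpleGraph V) (S : Finset (Sym2 V)) : Prop :=
  ↑S ⊆ G.edgeSet ∧ 2 ≤ S.card ∧
    ∀ e ∈ S, ∀ f ∈ S, e ≠ f → ¬ (G.deleteEdges {e, f}).Connected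

/-- A pairwise-disconnecting set is maximal if no pairwise-disconnecting set contains it
as a proper subset. -/
def IsMaxPDSet {V : Type*} (G : SimpleGraph V) (S : Finset (Sym2 V)) : Prop :=
  IsPDSet G S ∧ ∀ S' : Finset (Sym2 V), IsPDSet G S' → S ⊆ S' → S' = S

open scoped Classical in
/-- `SMfin G e` is the union of `{e}` and the set of all bridges of `G - e`. -/
noncomputable def SMfin {V : Type*} [Fintype V] [DecidableEq V] (G : SimpleGraph V)
    (e : Sym2 V) : Finset (Sym2 V) :=
  insert e (Finset.univ.filter fun f => (G.deleteEdges {e}).IsBridge f)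

/-!
If `G - e` is connected, then `G - {e, f}` is disconnected exactly when `f` is a bridge of `G - e`,
so `S_M(e)` contains every pairwise-disconnecting set through `e`, and it is maximal as soon as it
is pairwise-disconnecting itself. For distinct bridges `f` and `g` of `G - e` suppose that
`G - {f, g}` were connected. Then so is `G - g`, and by symmetry `e` is a bridge of `G - g`. A cycle
of `G - g` through `f` would avoid `e`, which is impossible because `f` is a bridge of `G - e`. So
`f` is a bridge of `G - g`, a contradiction.
-/

section Bridges

variable {V : Type*} {G : SimpleGraph V} {e f g : Sym2 V}

lemma connected_deleteEdges_singleton_iff (hG : G.Connected) :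
    (G.deleteEdges {e}).Connected ↔ ¬ G.IsBridge e := by
  induction e with
  | h u v =>
    exact ⟨fun h hb ↦ SimpleGraph.isBridge_iff.mp hb (h.preconnected u v),
      hG.connected_delete_edge_of_not_isBridge⟩

lemma mem_edgeSet_of_isBridge (hG : G.Preconnected) (he : G.IsBridge e) : e ∈ G.edgeSet := by
  induction e with
  | h u v => exact he.reachable_iff_adj.mp (hG u v)

lemma isBridge_deleteEdges_singleton_iff (he : (G.deleteEdges {e}).Connected) :
    (G.deleteEdges {e}).IsBridge f ↔ ¬ (G.deleteEdges {e, f}).Connected := by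
  rw [← Set.singleton_union, ← SimpleGraph.deleteEdges_deleteEdges,
    connected_deleteEdges_singleton_iff he, not_not]

lemma isBridge_deleteEdges_singleton_comm (he : (G.deleteEdges {e}).Connected)
    (hf : (G.deleteEdges {f}).Connected) :
    (G.deleteEdges {e}).IsBridge f ↔ (G.deleteEdges {f}).IsBridge e := by
  rw [isBridge_deleteEdges_singleton_iff he, isBridge_deleteEdges_singleton_iff hf, Set.pair_comm]

lemma isBridge_deleteEdges_singleton_trans (hge : (G.deleteEdges {g}).IsBridge e)
    (hef : (G.deleteEdges {e}).IsBridge f) (hf : f ∈ (G.deleteEdges {g}).edgeSet) :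
    (G.deleteEdges {g}).IsBridge f := by
  rw [SimpleGraph.isBridge_iff_forall_cycle_notMem hf]
  intro u p hp hfp
  have hep : e ∉ p.edges := hge.notMem_edges_of_isCycle hp
  have hpe : ∀ x ∈ p.edges, x ∈ (G.deleteEdges {e}).edgeSet := fun x hx ↦ by
    rw [SimpleGraph.edgeSet_deleteEdges]
    exact ⟨SimpleGraph.edgeSet_mono (G.deleteEdges_le _) (p.edges_subset_edgeSet hx),
      ne_of_mem_of_not_mem hx hep⟩
  exact hef.notMem_edges_of_isCycle (hp.transfer hpe) (by rwa [p.edges_transfer])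

lemma not_connected_deleteEdges_pair (he : (G.deleteEdges {e}).Connected)
    (hf : (G.deleteEdges {e}).IsBridge f) (hg : (G.deleteEdges {e}).IsBridge g) (hfg : f ≠ g) :
    ¬ (G.deleteEdges {f, g}).Connected := by
  intro hconn
  have hGg : (G.deleteEdges {g}).Connected := hconn.mono (G.deleteEdges_anti (by simp))
  have hge : (G.deleteEdges {g}).IsBridge e := (isBridge_deleteEdges_singleton_comm he hGg).mp hg
  have hfG : f ∈ G.edgeSet :=
    SimpleGraph.edgeSet_mono (G.deleteEdges_le _) (mem_edgeSet_of_isBridge he.preconnected hf)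
  have hgf : (G.deleteEdges {g}).IsBridge f :=
    isBridge_deleteEdges_singleton_trans hge hf (by simp [hfG, hfg])
  exact (isBridge_deleteEdges_singleton_iff hGg).mp hgf (by rwa [Set.pair_comm])

end Bridges

section PairwiseDisconnecting

variable {V : Type*}

/-- The counterpart of `IsPDSet` for sets of edges that may be infinite. -/
structure IsPairwiseDisconnecting (G : SimpleGraph V) (S : Set (Sym2 V)) : Prop where
  subset_edgeSet : S ⊆ G.edgeSet
  nontrivial : S.Nontrivial
  pairwise : S.Pairwise fun e f ↦ ¬ (G.deleteEdges {e, f}).Connected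

/-- The set `S_M(e)`, for a graph that may be infinite; `SMfin` is its finite counterpart. -/
def SM (G : SimpleGraph V) (e : Sym2 V) : Set (Sym2 V) :=
  insert e {f | (G.deleteEdges {e}).IsBridge f}

variable {G : SimpleGraph V} {e : Sym2 V}

lemma IsPairwiseDisconnecting.subset_SM {S : Set (Sym2 V)} (hS : IsPairwiseDisconnecting G S)
    (he : e ∈ S) (hconn : (G.deleteEdges {e}).Connected) : S ⊆ SM G e := by
  intro f hf
  obtain rfl | hef := eq_or_ne e f
  · exact Set.mem_insert _ _
  · exact Or.inr ((isBridge_deleteEdges_singleton_iff hconn).mpr (hS.pairwise he hf hef))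

lemma SM_subset_edgeSet (he : e ∈ G.edgeSet) (hconn : (G.deleteEdges {e}).Connected) :
    SM G e ⊆ G.edgeSet :=
  Set.insert_subset he fun _ hf ↦
    SimpleGraph.edgeSet_mono (G.deleteEdges_le _) (mem_edgeSet_of_isBridge hconn.preconnected hf)

lemma SM_pairwise (hconn : (G.deleteEdges {e}).Connected) :
    (SM G e).Pairwise fun f g ↦ ¬ (G.deleteEdges {f, g}).Connected := by
  have hsymm : Std.Symm fun f g ↦ ¬ (G.deleteEdges {f, g}).Connected :=
    ⟨fun f g h ↦ by rwa [Set.pair_comm]⟩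
  refine Set.pairwise_insert_of_symm.mpr ⟨?_, fun f hf _ ↦ ?_⟩
  · exact fun f hf g hg hfg ↦ not_connected_deleteEdges_pair hconn hf hg hfg
  · exact (isBridge_deleteEdges_singleton_iff hconn).mp hf

lemma isPDSet_iff_isPairwiseDisconnecting {S : Finset (Sym2 V)} :
    IsPDSet G S ↔ IsPairwiseDisconnecting G S := by
  have hcard : 2 ≤ S.card ↔ (S : Set (Sym2 V)).Nontrivial := Finset.one_lt_card_iff_nontrivial
  rw [IsPDSet, hcard]
  exact ⟨fun ⟨hsub, hnt, hpair⟩ ↦ ⟨hsub, hnt, hpair⟩,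
    fun ⟨hsub, hnt, hpair⟩ ↦ ⟨hsub, hnt, hpair⟩⟩

lemma isMaxPDSet_of_maximal {S : Finset (Sym2 V)}
    (hS : Maximal (IsPairwiseDisconnecting G) (S : Set (Sym2 V))) : IsMaxPDSet G S :=
  ⟨isPDSet_iff_isPairwiseDisconnecting.mpr hS.prop, fun _ hT hST ↦ Finset.coe_injective <|
    hS.eq_of_superset (isPDSet_iff_isPairwiseDisconnecting.mp hT) (Finset.coe_subset.mpr hST)⟩

lemma coe_SMfin [Fintype V] [DecidableEq V] (G : SimpleGraph V) (e : Sym2 V) :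
    (SMfin G e : Set (Sym2 V)) = SM G e := by
  simp [SMfin, SM]

theorem SMfin_isMaxPDSet_general (hG : G.Connected) (hbr : ¬ G.IsBridge e) {S : Set (Sym2 V)}
    (hS : IsPairwiseDisconnecting G S) (he : e ∈ S) :
    Maximal (IsPairwiseDisconnecting G) (SM G e) ∧ S ⊆ SM G e := by
  have hconn : (G.deleteEdges {e}).Connected := (connected_deleteEdges_singleton_iff hG).mpr hbr
  have hsub : S ⊆ SM G e := hS.subset_SM he hconn
  have hSM : IsPairwiseDisconnecting G (SM G e) :=
    ⟨SM_subset_edgeSet (hS.subset_edgeSet he) hconn, hS.nontrivial.mono hsub, SM_pairwise hconn⟩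
  exact ⟨⟨hSM, fun _ hT hle ↦ hT.subset_SM (hle (Set.mem_insert _ _)) hconn⟩, hsub⟩

end PairwiseDisconnecting

/-- For a pairwise-disconnecting set `S` of a finite connected bridgeless simple graph `G`
and `e ∈ S`, the set `S_M(e)` (the union of `{e}` and the bridges of `G - e`) is a maximal
pairwise-disconnecting set of `G` containing `S`. -/
theorem SMfin_isMaxPDSet {V : Type*} [Fintype V] [DecidableEq V]
    (G : SimpleGraph V) (hconn : G.Connected) (hbl : ∀ g : Sym2 V, ¬ G.IsBridge g)
    (S : Finset (Sym2 V)) (hS : IsPDSet G S) (e : Sym2 V) (he : e ∈ S) :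
    IsMaxPDSet G (SMfin G e) ∧ S ⊆ SMfin G e := by
  obtain ⟨hmax, hsub⟩ :=
    SMfin_isMaxPDSet_general hconn (hbl e) (isPDSet_iff_isPairwiseDisconnecting.mp hS) he
  exact ⟨isMaxPDSet_of_maximal (by rwa [coe_SMfin]), by rwa [← Finset.coe_subset, coe_SMfin]⟩
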